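/- For every ε > 0 there exists a constant C_ε > 0 such that for all positive integers N, m, M with m ≤ 2N² and M ≤ 2N², one has |Σ_{y=1}^{M} Σ_{t} ψ((N − m·t)/y)| ≤ C_ε · M · N^ε, where the inner sum runs over integers t with 1 ≤ t ≤ y and gcd(t,y) = 1. -/

import Mathlib

/-- The saw-tooth function `ψ(t) = t − ⌊t⌋ − 1/2`. -/
noncomputable def psi (t : ℝ) : ℝ := t - ⌊t⌋ - 1 / 2

lemma divisor_bound (δ : ℝ) (hδ : 0 < δ) :
    ∃ C : ℝ, 0 < C ∧ ∀ n : ℕ, 0 < n → (n.divisors.card : ℝ) ≤ C * (n : ℝ) ^ δ := by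
  have hl2 : 0 < Real.log 2 := Real.log_pos (by norm_num)
  set A : ℝ := 1 + 1 / (δ * Real.log 2) with hA
  have hA1 : 1 ≤ A := by
    have : 0 ≤ 1 / (δ * Real.log 2) := by positivity
    linarith
  set P : ℕ := ⌈(2 : ℝ) ^ (1 / δ)⌉₊ with hP
  have key : ∀ p e : ℕ, p.Prime →
      ((e : ℝ) + 1) ≤ (if p < P then A else 1) * ((p : ℝ) ^ e) ^ δ := by
    intro p e hp
    have hp2 : (2 : ℝ) ≤ p := by exact_mod_cast hp.two_le
    have hcomm : ((p : ℝ) ^ e) ^ δ = ((p : ℝ) ^ δ) ^ e := by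
      rw [← Real.rpow_natCast, ← Real.rpow_natCast, ← Real.rpow_mul (by positivity),
        ← Real.rpow_mul (by positivity), mul_comm]
    split_ifs with h
    · have h1 : 1 + (e : ℝ) * (δ * Real.log 2) ≤ ((p : ℝ) ^ e) ^ δ := by
        have h2 : ((2 : ℝ) ^ e) ^ δ ≤ ((p : ℝ) ^ e) ^ δ := by gcongr
        refine le_trans ?_ h2
        rw [Real.rpow_def_of_pos (by positivity), Real.log_pow]
        have := Real.add_one_le_exp (e * Real.log 2 * δ)
        linarith
      have h3 : A * (1 + (e : ℝ) * (δ * Real.log 2)) ≤ A * ((p : ℝ) ^ e) ^ δ := by gcongr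
      refine le_trans ?_ h3
      have h4 : A * (1 + (e : ℝ) * (δ * Real.log 2))
          = 1 + e + (1 / (δ * Real.log 2) + e * (δ * Real.log 2)) := by
        rw [hA]; field_simp; ring
      rw [h4]
      have : 0 ≤ 1 / (δ * Real.log 2) + e * (δ * Real.log 2) := by positivity
      linarith
    · rw [one_mul, hcomm]
      have h1 : (2 : ℝ) ^ (1 / δ) ≤ p := by
        refine (Nat.le_ceil _).trans ?_
        exact_mod_cast not_lt.mp h
      have h2 : (2 : ℝ) ≤ (p : ℝ) ^ δ := by
        calc (2 : ℝ) = ((2 : ℝ) ^ (1 / δ)) ^ δ := by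
              rw [← Real.rpow_mul (by norm_num), one_div_mul_cancel hδ.ne', Real.rpow_one]
          _ ≤ _ := by gcongr
      have h3 : ((e : ℝ) + 1) ≤ 2 ^ e := by exact_mod_cast Nat.lt_two_pow_self
      exact h3.trans (by gcongr)
  refine ⟨A ^ P, by positivity, fun n hn => ?_⟩
  rw [Nat.card_divisors hn.ne']
  push_cast
  calc ∏ p ∈ n.primeFactors, ((n.factorization p : ℝ) + 1)
      ≤ ∏ p ∈ n.primeFactors,
          ((if p < P then A else 1) * ((p : ℝ) ^ (n.factorization p)) ^ δ) := by
        apply Finset.prod_le_prod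
        · intros; positivity
        · intro p hp; exact key p _ (Nat.prime_of_mem_primeFactors hp)
    _ = (∏ p ∈ n.primeFactors, (if p < P then A else 1)) *
          (∏ p ∈ n.primeFactors, (p : ℝ) ^ (n.factorization p)) ^ δ := by
        rw [Finset.prod_mul_distrib, Real.finsetProd_rpow _ _ (by intros; positivity)]
    _ ≤ A ^ P * (n : ℝ) ^ δ := by
        have h1 : (∏ p ∈ n.primeFactors, (p : ℝ) ^ (n.factorization p)) = n := by
          conv_rhs => rw [← Nat.prod_factorization_pow_eq_self hn.ne']
          rw [Finsupp.prod]; push_cast; rfl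
        rw [h1]
        gcongr
        rw [Finset.prod_ite, Finset.prod_const, Finset.prod_const_one, mul_one]
        apply pow_le_pow_right₀ hA1
        calc _ ≤ (Finset.range P).card := by
              apply Finset.card_le_card
              intro p; simp
          _ = P := by simp

lemma psi_int_add (z : ℤ) (t : ℝ) : psi (t + z) = psi t := by
  simp [psi]

lemma psi_frac (q : ℕ) (hq : 0 < q) (i : ℤ) (θ : ℝ) (h0 : 0 ≤ θ) (h1 : θ < 1) :
    psi (((i : ℝ) + θ) / q) = (((i % (q : ℤ) : ℤ) : ℝ) + θ) / q - 1 / 2 := by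
  have hq' : (0 : ℝ) < q := by exact_mod_cast hq
  have e1 : ((i : ℝ) + θ) / q
      = (((i % (q : ℤ) : ℤ) : ℝ) + θ) / q + ((i / (q : ℤ) : ℤ) : ℝ) := by
    have : (i : ℝ) = ((i % (q : ℤ) : ℤ) : ℝ) + q * ((i / (q : ℤ) : ℤ) : ℝ) := by
      exact_mod_cast (Int.emod_add_mul_ediv i q).symm
    rw [this]; field_simp; push_cast; ring_nf
    try simp
  rw [e1, psi_int_add, psi]
  have hz : ⌊(((i % (q : ℤ) : ℤ) : ℝ) + θ) / q⌋ = 0 := by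
    rw [Int.floor_eq_zero_iff]
    have hn : 0 ≤ i % (q : ℤ) := Int.emod_nonneg _ (by omega)
    have hl : i % (q : ℤ) + 1 ≤ q := Int.emod_lt_of_pos _ (by omega)
    have hn' : (0 : ℝ) ≤ ((i % (q : ℤ) : ℤ) : ℝ) := by exact_mod_cast hn
    have hl' : ((i % (q : ℤ) : ℤ) : ℝ) + 1 ≤ q := by exact_mod_cast hl
    constructor
    · positivity
    · rw [div_lt_one hq']; linarith
  rw [hz]; simp

lemma sum_psi_coprime (q a : ℕ) (hq : 0 < q) (hc : Nat.Coprime a q) (x : ℝ) :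
    |∑ s ∈ Finset.range q, psi (x - a * s / q)| ≤ 1 / 2 := by
  have hq' : (0 : ℝ) < q := by exact_mod_cast hq
  haveI : NeZero q := ⟨hq.ne'⟩
  set n : ℤ := ⌊x * q⌋
  set θ : ℝ := Int.fract (x * q) with hθ
  have h0 : 0 ≤ θ := Int.fract_nonneg _
  have h1 : θ < 1 := Int.fract_lt_one _
  have hx : (n : ℝ) + θ = x * q := Int.floor_add_fract _
  have e1 : ∀ s : ℕ, psi (x - a * s / q)
      = ((((n - a * s : ℤ) : ZMod q).val : ℝ) + θ) / q - 1 / 2 := by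
    intro s
    have : x - a * s / q = (((n - a * s : ℤ) : ℝ) + θ) / q := by
      push_cast
      rw [eq_div_iff hq'.ne', sub_mul, div_mul_cancel₀ _ hq'.ne', ← hx]; ring
    rw [this, psi_frac q hq _ _ h0 h1]
    congr 3
    rw [← ZMod.val_intCast (n := q)]
    simp
  rw [Finset.sum_congr rfl (fun s _ => e1 s)]
  have e2 : ∑ s ∈ Finset.range q, (((((n - a * s : ℤ) : ZMod q).val : ℝ) + θ) / q - 1 / 2)
      = ∑ r ∈ Finset.range q, (((r : ℝ) + θ) / q - 1 / 2) := by
    have hmaps : ∀ s ∈ Finset.range q, ((n - a * s : ℤ) : ZMod q).val ∈ Finset.range q := by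
      intro s _; simpa using ZMod.val_lt _
    have hinj : Set.InjOn (fun s : ℕ => ((n - a * s : ℤ) : ZMod q).val)
        (Finset.range q : Set ℕ) := by
      intro s hs s' hs' h
      have h := ZMod.val_injective q h
      push_cast at h
      have h' : (a : ZMod q) * s = a * s' := sub_right_injective h
      have hu : IsUnit (a : ZMod q) := (ZMod.isUnit_iff_coprime a q).mpr hc
      have h'' := hu.mul_left_cancel h'
      rw [ZMod.natCast_eq_natCast_iff] at h''
      simp at hs hs'
      exact Nat.ModEq.eq_of_lt_of_lt h'' hs hs'
    have himg : (Finset.range q).image (fun s : ℕ => ((n - a * s : ℤ) : ZMod q).val)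
        = Finset.range q := by
      apply Finset.eq_of_subset_of_card_le
      · exact Finset.image_subset_iff.mpr hmaps
      · rw [Finset.card_image_of_injOn hinj]
    conv_rhs => rw [← himg, Finset.sum_image hinj]
  rw [e2]
  have e3 : ∑ r ∈ Finset.range q, (((r : ℝ) + θ) / q - 1 / 2) = θ - 1 / 2 := by
    rw [Finset.sum_sub_distrib, ← Finset.sum_div, Finset.sum_add_distrib]
    have : (∑ r ∈ Finset.range q, (r : ℝ)) * 2 = q * (q - 1) := by
      have := Finset.sum_range_id_mul_two q
      have h : (((∑ i ∈ Finset.range q, i) * 2 : ℕ) : ℝ) = ((q * (q - 1) : ℕ) : ℝ) := by rw [this]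
      push_cast [Nat.cast_sub hq] at h
      simpa using h
    have h2 : (∑ r ∈ Finset.range q, (r : ℝ)) = q * (q - 1) / 2 := by linarith
    rw [h2]; simp; field_simp; ring
  rw [e3, abs_le]; constructor <;> linarith

lemma sum_periodic (f : ℕ → ℝ) (q : ℕ) (hf : ∀ s, f (s + q) = f s) (g : ℕ) :
    ∑ s ∈ Finset.range (g * q), f s = g * ∑ s ∈ Finset.range q, f s := by
  have hf' : ∀ g s, f (g * q + s) = f s := by
    intro g s
    induction g with
    | zero => simp
    | succ k ih => rw [← ih, ← hf (k * q + s)]; congr 1; ring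
  induction g with
  | zero => simp
  | succ k ih =>
    rw [add_mul, one_mul, Finset.sum_range_add, ih]
    simp only [hf']
    push_cast; ring

lemma sum_psi (k m : ℕ) (hk : 0 < k) (x : ℝ) :
    |∑ s ∈ Finset.Icc 1 k, psi (x - m * s / k)| ≤ (Nat.gcd m k : ℝ) / 2 := by
  have hshift : ∑ s ∈ Finset.Icc 1 k, psi (x - m * s / k)
      = ∑ s ∈ Finset.range k, psi ((x - m / k) - m * s / k) := by
    rw [← Finset.Ico_succ_right_eq_Icc, Finset.sum_Ico_eq_sum_range]
    simp only [Nat.succ_eq_succ, Nat.succ_eq_add_one, Nat.add_sub_cancel]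
    apply Finset.sum_congr (by simp)
    intro s _
    congr 1; push_cast; ring
  rw [hshift]
  set x' := x - m / k
  set g := Nat.gcd m k with hg
  have hgpos : 0 < g := Nat.gcd_pos_of_pos_right _ hk
  obtain ⟨a, ha⟩ : g ∣ m := Nat.gcd_dvd_left _ _
  obtain ⟨q, hq⟩ : g ∣ k := Nat.gcd_dvd_right _ _
  have hqpos : 0 < q := by
    rcases Nat.eq_zero_or_pos q with h | h
    · subst h; omega
    · exact h
  have hc : Nat.Coprime a q := by
    have := Nat.coprime_div_gcd_div_gcd (m := m) (n := k) hgpos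
    rw [← hg] at this
    rwa [ha, hq, Nat.mul_div_cancel_left _ hgpos, Nat.mul_div_cancel_left _ hgpos] at this
  have hg' : (g : ℝ) ≠ 0 := by exact_mod_cast hgpos.ne'
  have hq' : (q : ℝ) ≠ 0 := by exact_mod_cast hqpos.ne'
  have e : ∀ s : ℕ, psi (x' - m * s / k) = psi (x' - a * s / q) := by
    intro s
    have hm : (m : ℝ) = g * a := by exact_mod_cast ha
    have hkk : (k : ℝ) = g * q := by exact_mod_cast hq
    rw [hm, hkk]
    congr 2; field_simp
  simp only [e]
  have hper : ∀ s : ℕ, psi (x' - a * ((s + q : ℕ) : ℝ) / q) = psi (x' - a * s / q) := by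
    intro s
    rw [← psi_int_add (-(a : ℤ)) (x' - a * s / q)]
    congr 1; push_cast; field_simp; ring
  have hr : Finset.range k = Finset.range (g * q) := by rw [← hq]
  rw [hr, sum_periodic (fun s => psi (x' - a * s / q)) q hper g, abs_mul, Nat.abs_cast]
  have := sum_psi_coprime q a hqpos hc x'
  have h2 := mul_le_mul_of_nonneg_left this (Nat.cast_nonneg (α := ℝ) g)
  linarith

lemma sum_multiples (f : ℕ → ℝ) (n d : ℕ) (hd : 0 < d) :
    ∑ t ∈ Finset.Icc 1 n, (if d ∣ t then f t else 0)
      = ∑ s ∈ Finset.Icc 1 (n / d), f (d * s) := by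
  rw [← Finset.sum_filter]
  symm
  apply Finset.sum_bij (fun s _ => d * s)
  · intro s hs
    simp only [Finset.mem_Icc, Finset.mem_filter] at hs ⊢
    refine ⟨⟨Nat.mul_pos hd hs.1, ?_⟩, dvd_mul_right _ _⟩
    rw [mul_comm]; exact (Nat.le_div_iff_mul_le hd).mp hs.2
  · intro a _ b _ h; exact Nat.eq_of_mul_eq_mul_left hd h
  · intro t ht
    simp only [Finset.mem_Icc, Finset.mem_filter] at ht
    obtain ⟨⟨h1, h2⟩, s, rfl⟩ := ht
    refine ⟨s, ?_, rfl⟩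
    simp only [Finset.mem_Icc]
    refine ⟨Nat.pos_of_mul_pos_left h1, (Nat.le_div_iff_mul_le hd).mpr (by rwa [mul_comm])⟩
  · intros; rfl

lemma moebius_ind (t y : ℕ) (hy : 0 < y) :
    (∑ d ∈ y.divisors, if d ∣ t then (ArithmeticFunction.moebius d : ℝ) else 0)
      = if Nat.gcd t y = 1 then 1 else 0 := by
  have h := congrArg (fun f => f (Nat.gcd t y)) ArithmeticFunction.coe_zeta_mul_moebius
  simp only [ArithmeticFunction.coe_zeta_mul_apply, ArithmeticFunction.one_apply] at h
  have h2 : ((∑ i ∈ (Nat.gcd t y).divisors, ArithmeticFunction.moebius i : ℤ) : ℝ)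
     = ((if Nat.gcd t y = 1 then 1 else 0 : ℤ) : ℝ) := by rw [h]
  push_cast at h2
  rw [← h2, ← Finset.sum_filter]
  apply Finset.sum_congr _ (fun _ _ => rfl)
  ext d
  have : Nat.gcd t y ≠ 0 := (Nat.gcd_pos_of_pos_right _ hy).ne'
  simp only [Finset.mem_filter, Nat.mem_divisors, Nat.dvd_gcd_iff]
  constructor
  · rintro ⟨⟨a, b⟩, c⟩; exact ⟨⟨c, a⟩, this⟩
  · rintro ⟨⟨a, b⟩, c⟩; exact ⟨⟨b, hy.ne'⟩, a⟩

lemma inner_bound (N m y : ℕ) (hy : 0 < y) :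
    |∑ t ∈ Finset.Icc 1 y,
      if Nat.gcd t y = 1 then psi (((N : ℝ) - (m : ℝ) * (t : ℝ)) / (y : ℝ)) else 0|
      ≤ ∑ k ∈ y.divisors, (Nat.gcd m k : ℝ) / 2 := by
  set f : ℕ → ℝ := fun t => psi (((N : ℝ) - (m : ℝ) * (t : ℝ)) / (y : ℝ)) with hf
  have e : (∑ t ∈ Finset.Icc 1 y, if Nat.gcd t y = 1 then f t else 0)
      = ∑ d ∈ y.divisors, (ArithmeticFunction.moebius d : ℝ) *
          ∑ s ∈ Finset.Icc 1 (y / d), f (d * s) := by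
    calc _ = ∑ t ∈ Finset.Icc 1 y, ∑ d ∈ y.divisors,
          (if d ∣ t then (ArithmeticFunction.moebius d : ℝ) * f t else 0) := by
            apply Finset.sum_congr rfl
            intro t _
            have := congrArg (fun z => z * f t) (moebius_ind t y hy)
            simp only [Finset.sum_mul, ite_mul, one_mul, zero_mul] at this
            exact this.symm
      _ = _ := by
        rw [Finset.sum_comm]
        apply Finset.sum_congr rfl
        intro d hd
        have hdp : 0 < d := Nat.pos_of_mem_divisors hd
        rw [← sum_multiples f y d hdp, Finset.mul_sum]
        simp only [mul_ite, mul_zero]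
  change |∑ t ∈ Finset.Icc 1 y, if Nat.gcd t y = 1 then f t else 0| ≤ _
  rw [e, ← Nat.sum_div_divisors y (fun k => (Nat.gcd m k : ℝ) / 2)]
  refine (Finset.abs_sum_le_sum_abs _ _).trans (Finset.sum_le_sum ?_)
  intro d hd
  have hdp : 0 < d := Nat.pos_of_mem_divisors hd
  obtain ⟨k, hk⟩ := Nat.dvd_of_mem_divisors hd
  have hkp : 0 < k := by
    rcases Nat.eq_zero_or_pos k with h | h
    · subst h; omega
    · exact h
  have hyd : y / d = k := by rw [hk, Nat.mul_div_cancel_left _ hdp]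
  rw [hyd, abs_mul]
  have h1 : |(ArithmeticFunction.moebius d : ℝ)| ≤ 1 := by
    exact_mod_cast ArithmeticFunction.abs_moebius_le_one (n := d)
  have h2 := sum_psi k m hkp ((N : ℝ) / y)
  have h3 : ∑ s ∈ Finset.Icc 1 k, f (d * s)
      = ∑ s ∈ Finset.Icc 1 k, psi ((N : ℝ) / y - m * s / k) := by
    apply Finset.sum_congr rfl
    intro s _
    have hd' : (d : ℝ) ≠ 0 := by exact_mod_cast hdp.ne'
    have hk' : (k : ℝ) ≠ 0 := by exact_mod_cast hkp.ne'
    have hy' : (y : ℝ) = d * k := by exact_mod_cast hk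
    simp only [hf]
    rw [hy']
    congr 1; push_cast; field_simp
  have h2' : |∑ s ∈ Finset.Icc 1 k, f (d * s)| ≤ (Nat.gcd m k : ℝ) / 2 := by
    rw [h3]; exact h2
  calc _ ≤ 1 * ((Nat.gcd m k : ℝ) / 2) := by gcongr
    _ = _ := one_mul _

lemma harm (M : ℕ) : ∑ j ∈ Finset.Icc 1 M, (1 : ℝ) / j ≤ 1 + Real.log M := by
  have := harmonic_le_one_add_log M
  rw [harmonic_eq_sum_Icc] at this
  push_cast at this
  simpa using this

lemma gcd_sum (m M : ℕ) (hm : 0 < m) :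
    ∑ k ∈ Finset.Icc 1 M, (Nat.gcd m k : ℝ) / k
      ≤ m.divisors.card * (1 + Real.log M) := by
  calc _ ≤ ∑ k ∈ Finset.Icc 1 M, ∑ e ∈ m.divisors, (if e ∣ k then (e : ℝ) / k else 0) := by
        apply Finset.sum_le_sum
        intro k _
        have := Finset.single_le_sum (s := m.divisors)
          (f := fun e => if e ∣ k then (e : ℝ) / k else 0)
          (by intro i _; split_ifs <;> positivity)
          (Nat.mem_divisors.mpr ⟨Nat.gcd_dvd_left m k, hm.ne'⟩)
        simpa [Nat.gcd_dvd_right] using this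
    _ = ∑ e ∈ m.divisors, ∑ k ∈ Finset.Icc 1 M, (if e ∣ k then (e : ℝ) / k else 0) :=
        Finset.sum_comm
    _ ≤ ∑ e ∈ m.divisors, (1 + Real.log M) := by
        apply Finset.sum_le_sum
        intro e he
        have hep : 0 < e := Nat.pos_of_mem_divisors he
        have he' : (e : ℝ) ≠ 0 := by exact_mod_cast hep.ne'
        rw [sum_multiples (fun k => (e : ℝ) / k) M e hep]
        refine le_trans ?_ (harm M)
        calc _ = ∑ s ∈ Finset.Icc 1 (M / e), (1 : ℝ) / s := by
              apply Finset.sum_congr rfl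
              intro s hs
              have : (s : ℝ) ≠ 0 := by
                have := (Finset.mem_Icc.mp hs).1
                exact_mod_cast (by omega : s ≠ 0)
              push_cast; field_simp
          _ ≤ _ := by
              apply Finset.sum_le_sum_of_subset_of_nonneg
              · exact Finset.Icc_subset_Icc_right (Nat.div_le_self _ _)
              · intros; positivity
    _ = _ := by simp; try ring

lemma total_bound (m M : ℕ) :
    ∑ y ∈ Finset.Icc 1 M, ∑ k ∈ y.divisors, (Nat.gcd m k : ℝ) / 2
      ≤ M * ∑ k ∈ Finset.Icc 1 M, (Nat.gcd m k : ℝ) / k := by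
  calc _ = ∑ y ∈ Finset.Icc 1 M, ∑ k ∈ Finset.Icc 1 M,
            (if k ∣ y then (Nat.gcd m k : ℝ) / 2 else 0) := by
        apply Finset.sum_congr rfl
        intro y hy
        rw [← Finset.sum_filter]
        apply Finset.sum_congr _ (fun _ _ => rfl)
        ext k
        simp only [Finset.mem_Icc, Finset.mem_filter, Nat.mem_divisors] at hy ⊢
        constructor
        · rintro ⟨h, h'⟩
          exact ⟨⟨Nat.pos_of_dvd_of_pos h hy.1, (Nat.le_of_dvd hy.1 h).trans hy.2⟩, h⟩
        · rintro ⟨_, h⟩; exact ⟨h, by omega⟩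
    _ = ∑ k ∈ Finset.Icc 1 M, ∑ y ∈ Finset.Icc 1 M,
            (if k ∣ y then (Nat.gcd m k : ℝ) / 2 else 0) := Finset.sum_comm
    _ ≤ _ := by
        rw [Finset.mul_sum]
        apply Finset.sum_le_sum
        intro k hk
        have hkp : 0 < k := (Finset.mem_Icc.mp hk).1
        rw [sum_multiples (fun _ => (Nat.gcd m k : ℝ) / 2) M k hkp]
        simp only [Finset.sum_const, Nat.card_Icc, Nat.add_sub_cancel, nsmul_eq_mul]
        have h1 : ((M / k : ℕ) : ℝ) ≤ (M : ℝ) / k := Nat.cast_div_le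
        calc _ ≤ (M : ℝ) / k * ((Nat.gcd m k : ℝ) / 1) := by gcongr; norm_num
          _ = _ := by ring

theorem stmt11 :
    ∀ ε : ℝ, 0 < ε → ∃ C : ℝ, 0 < C ∧
      ∀ N m M : ℕ, 0 < N → 0 < m → 0 < M → m ≤ 2 * N ^ 2 → M ≤ 2 * N ^ 2 →
        |∑ y ∈ Finset.Icc 1 M, ∑ t ∈ Finset.Icc 1 y,
            if Nat.gcd t y = 1 then psi (((N : ℝ) - (m : ℝ) * (t : ℝ)) / (y : ℝ)) else 0| ≤
          C * (M : ℝ) * (N : ℝ) ^ ε := by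
  intro ε hε
  obtain ⟨C, hC, hdiv⟩ := divisor_bound (ε / 4) (by positivity)
  refine ⟨C * (1 + 1 / (ε / 4)) * 2 ^ (ε / 2), by positivity, ?_⟩
  intro N m M hN hm hM hmN hMN
  have hN1 : (1 : ℝ) ≤ N := by exact_mod_cast hN
  have hm' : (m : ℝ) ≤ 2 * (N : ℝ) ^ 2 := by exact_mod_cast hmN
  have hM' : (M : ℝ) ≤ 2 * (N : ℝ) ^ 2 := by exact_mod_cast hMN
  have hM1 : (1 : ℝ) ≤ M := by exact_mod_cast hM
  set Z : ℝ := 2 * (N : ℝ) ^ 2 with hZ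
  have hZ1 : 1 ≤ Z := hM1.trans hM'
  have b1 : (m.divisors.card : ℝ) ≤ C * Z ^ (ε / 4) := by
    refine (hdiv m hm).trans ?_
    gcongr
  have b2 : 1 + Real.log M ≤ (1 + 1 / (ε / 4)) * Z ^ (ε / 4) := by
    have h1 : Real.log M ≤ Real.log Z := Real.log_le_log (by positivity) hM'
    have h2 := Real.log_le_rpow_div (x := Z) (ε := ε / 4) (by positivity) (by positivity)
    have h3 : 1 ≤ Z ^ (ε / 4) := Real.one_le_rpow hZ1 (by positivity)
    have h4 : (1 + 1 / (ε / 4)) * Z ^ (ε / 4) = Z ^ (ε / 4) + Z ^ (ε / 4) / (ε / 4) := by ring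
    linarith
  have b3 : 0 ≤ 1 + Real.log M := by
    have := Real.log_nonneg hM1
    linarith
  have b4 : Z ^ (ε / 4) * Z ^ (ε / 4) = 2 ^ (ε / 2) * (N : ℝ) ^ ε := by
    rw [← Real.rpow_add (by positivity), hZ, Real.mul_rpow (by norm_num) (by positivity),
      ← Real.rpow_natCast, ← Real.rpow_mul (by positivity)]
    congr 2 <;> push_cast <;> ring
  calc _ ≤ ∑ y ∈ Finset.Icc 1 M, ∑ k ∈ y.divisors, (Nat.gcd m k : ℝ) / 2 := by
        refine (Finset.abs_sum_le_sum_abs _ _).trans (Finset.sum_le_sum ?_)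
        intro y hy
        exact inner_bound N m y (Finset.mem_Icc.mp hy).1
    _ ≤ M * ∑ k ∈ Finset.Icc 1 M, (Nat.gcd m k : ℝ) / k := total_bound m M
    _ ≤ M * (m.divisors.card * (1 + Real.log M)) := by
        gcongr
        exact gcd_sum m M hm
    _ ≤ M * ((C * Z ^ (ε / 4)) * ((1 + 1 / (ε / 4)) * Z ^ (ε / 4))) := by
        gcongr
    _ = C * (1 + 1 / (ε / 4)) * (Z ^ (ε / 4) * Z ^ (ε / 4)) * M := by ring
    _ = _ := by rw [b4]; ring
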